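/- For the exponential compound Poisson subordinator with Φ(s) = s/(s+c), c > 0, the Mellin transforms of the perpetuity and remainder are I(r) = Γ(c+r)/Γ(c+1) and R(r) = Γ(c+1)Γ(r)/Γ(c+r) = c·B(r,c) for all r > 0; hence the perpetuity is a gamma variable of parameter c+1 and the remainder is a beta variable of parameters (1,c). -/

import Mathlib

open MeasureTheory Real Set

/-!
A log-convex solution `f` of `f (r + 1) = g r * f r` is squeezed, by the monotonicity of the
secants of `log f`, towards `f (n + r) ≈ f n * g n ^ r` as `n → ∞`, so it is determined by `f 1` as
soon as `g (t + x) / g t → 1` (Webster's extension of the Bohr–Mollerup theorem). This identifies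
`I`. The product `I * R` is log-convex and its functional equation `(I * R) (r + 1) = r * (I * R) r`
no longer involves `Φ`, so `I * R = Γ` by Bohr–Mollerup, which gives `R`.

For the laws, the Mellin transform of a positive random variable `X` is the moment generating
function of `log X`, which near `0` determines the law by analytic continuation to the imaginary
axis.
-/

open Filter Topology ProbabilityTheory

section Webster

lemma tendsto_increment_sub_mul_of_convexOn {K g : ℝ → ℝ} (hK : ConvexOn ℝ (Ioi 0) K)
    (hKg : ∀ x > 0, K (x + 1) = K x + g x)
    (hg : ∀ x > 0, Tendsto (fun t => g (t + x) - g t) atTop (𝓝 0)) {x : ℝ} (hx : 0 < x) :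
    Tendsto (fun t => K (t + 1 + x) - K (t + 1) - x * g t) atTop (𝓝 0) := by
  have lower : ∀ t > 0, x * g t ≤ K (t + 1 + x) - K (t + 1) := fun t ht => by
    have := hK.slope_mono_adjacent (x := t) (y := t + 1) (z := t + 1 + x)
      (mem_Ioi.2 ht) (mem_Ioi.2 (by positivity)) (by linarith) (by linarith)
    rwa [hKg t ht, add_sub_cancel_left, add_sub_cancel_left, add_sub_cancel_left, div_one,
      le_div_iff₀ hx, mul_comm, ← hKg t ht] at this
  have upper : ∀ t > 0, K (t + 1 + x) - K (t + 1) ≤ x * g (t + (1 + x)) := fun t ht => by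
    rw [← add_assoc]
    have := hK.slope_mono_adjacent (x := t + 1) (y := t + 1 + x) (z := t + 1 + x + 1)
      (mem_Ioi.2 (by positivity)) (mem_Ioi.2 (by positivity)) (by linarith) (by linarith)
    rwa [hKg (t + 1 + x) (by positivity), add_sub_cancel_left, add_sub_cancel_left,
      add_sub_cancel_left, div_one, div_le_iff₀ hx, mul_comm] at this
  have hlim : Tendsto (fun t => x * (g (t + (1 + x)) - g t)) atTop (𝓝 0) := by
    simpa only [mul_zero] using (hg (1 + x) (by positivity)).const_mul x
  refine squeeze_zero' ?_ ?_ hlim <;> filter_upwards [eventually_gt_atTop 0] with t ht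
  · linarith [lower t ht]
  · linarith [upper t ht]

lemma add_natCast_eq_of_add_one_eq {d : ℝ → ℝ} (hd : ∀ x > 0, d (x + 1) = d x) {x : ℝ}
    (hx : 0 < x) (n : ℕ) : d (x + n) = d x := by
  induction n with
  | zero => simp
  | succ n ih => rw [Nat.cast_succ, ← add_assoc, hd _ (by positivity), ih]

lemma eqOn_of_convexOn_of_add_one {F H g : ℝ → ℝ}
    (hF : ConvexOn ℝ (Ioi 0) F) (hH : ConvexOn ℝ (Ioi 0) H)
    (hFg : ∀ x > 0, F (x + 1) = F x + g x) (hHg : ∀ x > 0, H (x + 1) = H x + g x)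
    (hg : ∀ x > 0, Tendsto (fun t => g (t + x) - g t) atTop (𝓝 0)) (h1 : F 1 = H 1) :
    EqOn F H (Ioi 0) := by
  intro x hx
  have periodic : ∀ y > 0, F (y + 1) - H (y + 1) = F y - H y := fun y hy => by
    rw [hFg y hy, hHg y hy, add_sub_add_right_eq_sub]
  have increments := (tendsto_increment_sub_mul_of_convexOn hF hFg hg hx).sub
    (tendsto_increment_sub_mul_of_convexOn hH hHg hg hx) |>.comp tendsto_natCast_atTop_atTop
  have constant : ∀ n : ℕ, F (n + 1 + x) - F (n + 1) - x * g n
      - (H (n + 1 + x) - H (n + 1) - x * g n) = F x - H x := fun n => by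
    have atX := add_natCast_eq_of_add_one_eq (d := fun y => F y - H y) periodic hx (n + 1)
    have atOne := add_natCast_eq_of_add_one_eq (d := fun y => F y - H y) periodic one_pos n
    simp only [Nat.cast_succ, add_comm x, add_comm (1 : ℝ) n] at atX atOne
    linarith
  refine sub_eq_zero.1 (tendsto_nhds_unique (tendsto_const_nhds.congr fun n => ?_)
    (increments.trans_eq (by rw [sub_zero])))
  exact (constant n).symm

/-- The normalized log-convex solutions of `f (r + 1) = g r * f r` on `(0, ∞)`, as in Webster's
extension of the Bohr–Mollerup theorem. For a Bernstein function `Φ`, the Mellin transforms of the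
perpetuity and of the remainder are those with `g r = r / Φ r` and `g r = Φ r`. -/
structure IsWebsterSolution (g f : ℝ → ℝ) : Prop where
  pos : ∀ r > 0, 0 < f r
  map_one : f 1 = 1
  map_add_one : ∀ r > 0, f (r + 1) = g r * f r
  convexOn_log : ConvexOn ℝ (Ioi 0) fun r => log (f r)

namespace IsWebsterSolution

variable {g g₁ g₂ f f₁ f₂ : ℝ → ℝ}

lemma multiplier_pos (h : IsWebsterSolution g f) {r : ℝ} (hr : 0 < r) : 0 < g r :=
  pos_of_mul_pos_left (h.map_add_one r hr ▸ h.pos (r + 1) (by positivity)) (h.pos r hr).le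

lemma congr_multiplier (h : IsWebsterSolution g₁ f) (hg : EqOn g₁ g₂ (Ioi 0)) :
    IsWebsterSolution g₂ f where
  __ := h
  map_add_one r hr := by rw [h.map_add_one r hr, hg hr]

lemma log_map_add_one (h : IsWebsterSolution g f) {r : ℝ} (hr : 0 < r) :
    log (f (r + 1)) = log (f r) + log (g r) := by
  rw [h.map_add_one r hr, log_mul (h.multiplier_pos hr).ne' (h.pos r hr).ne', add_comm]

lemma eqOn (h₁ : IsWebsterSolution g f₁) (h₂ : IsWebsterSolution g f₂)
    (hg : ∀ x > 0, Tendsto (fun t => g (t + x) / g t) atTop (𝓝 1)) : EqOn f₁ f₂ (Ioi 0) := by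
  have hlog : ∀ x > 0, Tendsto (fun t => log (g (t + x)) - log (g t)) atTop (𝓝 0) := by
    intro x hx
    refine (log_one ▸ (hg x hx).log one_ne_zero).congr' ?_
    filter_upwards [eventually_gt_atTop 0] with t ht
    exact log_div (h₁.multiplier_pos (by positivity)).ne' (h₁.multiplier_pos ht).ne'
  intro r hr
  refine log_injOn_pos (h₁.pos r hr) (h₂.pos r hr) ?_
  exact eqOn_of_convexOn_of_add_one h₁.convexOn_log h₂.convexOn_log
    (fun _ => h₁.log_map_add_one) (fun _ => h₂.log_map_add_one) hlog
    (by rw [h₁.map_one, h₂.map_one]) hr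

lemma mul (h₁ : IsWebsterSolution g₁ f₁) (h₂ : IsWebsterSolution g₂ f₂) :
    IsWebsterSolution (g₁ * g₂) (f₁ * f₂) where
  pos r hr := mul_pos (h₁.pos r hr) (h₂.pos r hr)
  map_one := by rw [Pi.mul_apply, h₁.map_one, h₂.map_one, one_mul]
  map_add_one r hr := by
    simp only [Pi.mul_apply, h₁.map_add_one r hr, h₂.map_add_one r hr, mul_mul_mul_comm]
  convexOn_log := (h₁.convexOn_log.add h₂.convexOn_log).congr fun r hr =>
    (log_mul (h₁.pos r hr).ne' (h₂.pos r hr).ne').symm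

lemma mul_eq_Gamma {Φ I R : ℝ → ℝ} (hI : IsWebsterSolution (fun r => r / Φ r) I)
    (hR : IsWebsterSolution Φ R) {r : ℝ} (hr : 0 < r) : I r * R r = Gamma r := by
  have h : IsWebsterSolution id (I * R) := (hI.mul hR).congr_multiplier fun x hx =>
    div_mul_cancel₀ x (hR.multiplier_pos hx).ne'
  exact eq_Gamma_of_log_convex h.convexOn_log (h.map_add_one _) (h.pos _) h.map_one hr

lemma Gamma_add_div {c : ℝ} (hc : 0 ≤ c) :
    IsWebsterSolution (fun r => r + c) fun r => Gamma (c + r) / Gamma (c + 1) := by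
  have hΓ : ∀ r > 0, 0 < Gamma (c + r) := fun r hr => Gamma_pos_of_pos (by positivity)
  have hconv : ConvexOn ℝ (Ioi 0) fun r => log (Gamma (c + r)) :=
    (convexOn_log_Gamma.translate_right c).subset
      (fun r hr => add_pos_of_nonneg_of_pos hc hr) (convex_Ioi 0)
  refine ⟨fun r hr => div_pos (hΓ r hr) (hΓ 1 one_pos), div_self (hΓ 1 one_pos).ne',
    fun r hr => ?_, ?_⟩
  · rw [← add_assoc, Gamma_add_one (by positivity), mul_div_assoc, add_comm c r]
  · refine (hconv.add_const (-log (Gamma (c + 1)))).congr fun r hr => ?_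
    rw [Pi.add_apply, log_div (hΓ r hr).ne' (hΓ 1 one_pos).ne', sub_eq_add_neg]

lemma eq_Gamma_add_div {c : ℝ} (hc : 0 ≤ c) (h : IsWebsterSolution (fun r => r + c) f) {r : ℝ}
    (hr : 0 < r) : f r = Gamma (c + r) / Gamma (c + 1) := by
  refine h.eqOn (Gamma_add_div hc) (fun x _ => ?_) hr
  have hlim : Tendsto (fun t : ℝ => 1 + x / (t + c)) atTop (𝓝 1) := by
    simpa only [add_zero, id_eq] using (tendsto_const_nhds (x := (1 : ℝ))).add
      (tendsto_const_nhds.div_atTop (tendsto_atTop_add_const_right _ c tendsto_id))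
  refine hlim.congr' ?_
  filter_upwards [eventually_gt_atTop 0] with t ht
  field_simp
  ring

end IsWebsterSolution

end Webster

section Mellin

variable {Ω Ω' : Type*} {mΩ : MeasurableSpace Ω} {mΩ' : MeasurableSpace Ω'}
  {μ : Measure Ω} {ν : Measure Ω'} {X : Ω → ℝ} {Y : Ω' → ℝ}

lemma map_eq_of_mgf_eventuallyEq [IsFiniteMeasure μ] [IsFiniteMeasure ν]
    (hX : 0 ∈ interior (integrableExpSet X μ)) (hY : 0 ∈ interior (integrableExpSet Y ν))
    (h : mgf X μ =ᶠ[𝓝 0] mgf Y ν) : μ.map X = ν.map Y := by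
  set S : Set ℝ := interior (integrableExpSet X μ) ∩ interior (integrableExpSet Y ν)
  have hstrip : IsPreconnected {z : ℂ | z.re ∈ S} :=
    ((convex_integrableExpSet.interior.inter convex_integrableExpSet.interior).linear_preimage
      Complex.reLm).isPreconnected
  have hreal : ∃ᶠ z in 𝓝[≠] (0 : ℂ), complexMGF X μ z = complexMGF Y ν z := by
    have hcoe : Tendsto ((↑) : ℝ → ℂ) (𝓝[≠] 0) (𝓝[≠] 0) :=
      Complex.continuous_ofReal.continuousWithinAt.tendsto_nhdsWithin fun x hx => by simpa using hx
    refine hcoe.frequently (Eventually.frequently (eventually_nhdsWithin_of_eventually_nhds ?_))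
    filter_upwards [h] with x hx
    rw [complexMGF_ofReal, complexMGF_ofReal, hx]
  have hEq : EqOn (complexMGF X μ) (complexMGF Y ν) {z | z.re ∈ S} :=
    (analyticOnNhd_complexMGF.mono fun z hz => hz.1).eqOn_of_preconnected_of_frequently_eq
      (analyticOnNhd_complexMGF.mono fun z hz => hz.2) hstrip (z₀ := 0) ⟨hX, hY⟩ hreal
  refine Measure.ext_of_charFun (funext fun t => ?_)
  rw [← complexMGF_mul_I (aemeasurable_of_mem_interior_integrableExpSet hX),
    ← complexMGF_mul_I (aemeasurable_of_mem_interior_integrableExpSet hY)]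
  exact hEq (by simpa using ⟨hX, hY⟩)

lemma rpow_ae_eq_exp_mul_log (hX : ∀ᵐ ω ∂μ, 0 < X ω) (s : ℝ) :
    (fun ω => X ω ^ s) =ᵐ[μ] fun ω => exp (s * log (X ω)) := by
  filter_upwards [hX] with ω hω
  rw [rpow_def_of_pos hω, mul_comm]

lemma mgf_log_eq_integral_rpow (hX : ∀ᵐ ω ∂μ, 0 < X ω) (s : ℝ) :
    mgf (fun ω => log (X ω)) μ s = ∫ ω, X ω ^ s ∂μ :=
  (integral_congr_ae (rpow_ae_eq_exp_mul_log hX s)).symm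

-- A nonzero Bochner integral carries the integrability of `X ^ s` with it.
lemma zero_mem_interior_integrableExpSet_log (hX : ∀ᵐ ω ∂μ, 0 < X ω)
    (hne : ∀ᶠ s in 𝓝 (0 : ℝ), ∫ ω, X ω ^ s ∂μ ≠ 0) :
    0 ∈ interior (integrableExpSet (fun ω => log (X ω)) μ) := by
  rw [mem_interior_iff_mem_nhds]
  filter_upwards [hne] with s hs
  exact (Integrable.of_integral_ne_zero hs).congr (rpow_ae_eq_exp_mul_log hX s)

lemma map_exp_map_log (hX : ∀ᵐ ω ∂μ, 0 < X ω) (hlog : AEMeasurable (fun ω => log (X ω)) μ) :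
    (μ.map fun ω => log (X ω)).map exp = μ.map X := by
  rw [AEMeasurable.map_map_of_aemeasurable measurable_exp.aemeasurable hlog]
  exact Measure.map_congr (hX.mono fun ω => exp_log)

lemma map_eq_of_integral_rpow_eventuallyEq [IsFiniteMeasure μ] [IsFiniteMeasure ν]
    (hX : ∀ᵐ ω ∂μ, 0 < X ω) (hY : ∀ᵐ ω ∂ν, 0 < Y ω)
    (hne : ∀ᶠ s in 𝓝 (0 : ℝ), ∫ ω, Y ω ^ s ∂ν ≠ 0)
    (h : ∀ᶠ s in 𝓝 (0 : ℝ), ∫ ω, X ω ^ s ∂μ = ∫ ω, Y ω ^ s ∂ν) : μ.map X = ν.map Y := by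
  have hXint := zero_mem_interior_integrableExpSet_log hX (by
    filter_upwards [h, hne] with s hs hs' using hs ▸ hs')
  have hYint := zero_mem_interior_integrableExpSet_log hY hne
  have hlog : μ.map (fun ω => log (X ω)) = ν.map (fun ω => log (Y ω)) := by
    refine map_eq_of_mgf_eventuallyEq hXint hYint ?_
    filter_upwards [h] with s hs
    rw [mgf_log_eq_integral_rpow hX, mgf_log_eq_integral_rpow hY, hs]
  rw [← map_exp_map_log hX (aemeasurable_of_mem_interior_integrableExpSet hXint), hlog,
    map_exp_map_log hY (aemeasurable_of_mem_interior_integrableExpSet hYint)]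

end Mellin

section GammaBeta

lemma integral_withDensity_ofReal_of_mul_ae_eq {α : Type*} {mα : MeasurableSpace α}
    {μ : Measure α} {p q g : α → ℝ} {C : ℝ} (hp : AEMeasurable p μ) (hp0 : 0 ≤ p)
    (hq : AEStronglyMeasurable q μ) (hq0 : 0 ≤ q) (hq1 : ∫⁻ x, ENNReal.ofReal (q x) ∂μ = 1)
    (h : (fun x => p x * g x) =ᵐ[μ] fun x => C * q x) :
    ∫ x, g x ∂(μ.withDensity fun x => ENNReal.ofReal (p x)) = C := by
  have hq_integral : ∫ x, q x ∂μ = 1 := by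
    rw [integral_eq_lintegral_of_nonneg_ae (ae_of_all _ hq0) hq, hq1, ENNReal.toReal_one]
  rw [integral_withDensity_eq_integral_toReal_smul₀ (by fun_prop) (by simp)]
  simp only [ENNReal.toReal_ofReal (hp0 _), smul_eq_mul]
  rw [integral_congr_ae h, integral_const_mul, hq_integral, mul_one]

lemma integral_rpow_gammaMeasure {a b s : ℝ} (ha : 0 < a) (hb : 0 < b) (has : 0 < a + s) :
    ∫ x, x ^ s ∂gammaMeasure a b = Gamma (a + s) / (Gamma a * b ^ s) := by
  refine integral_withDensity_ofReal_of_mul_ae_eq (by fun_prop)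
    (gammaPDFReal_nonneg ha hb) (q := gammaPDFReal (a + s) b) (by fun_prop)
    (gammaPDFReal_nonneg has hb) (lintegral_gammaPDF_eq_one has hb) ?_
  filter_upwards [Measure.ae_ne volume (0 : ℝ)] with x hx
  rcases hx.lt_or_gt with hneg | hpos
  · simp [gammaPDFReal, hneg.not_ge]
  · have hΓa := (Gamma_pos_of_pos ha).ne'
    have hΓas := (Gamma_pos_of_pos has).ne'
    have hbs := (rpow_pos_of_pos hb s).ne'
    simp only [gammaPDFReal, hpos.le, if_true]
    rw [add_sub_right_comm, rpow_add hpos, rpow_add hb]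
    field_simp

lemma ae_pos_gammaMeasure (a b : ℝ) : ∀ᵐ x ∂gammaMeasure a b, 0 < x := by
  unfold gammaMeasure gammaPDF
  rw [ae_withDensity_iff (by fun_prop)]
  filter_upwards [Measure.ae_ne volume (0 : ℝ)] with x hx hpdf
  exact hx.symm.lt_of_le (not_lt.1 (mt gammaPDF_of_neg hpdf))

lemma betaPDFReal_nonneg {a b : ℝ} (ha : 0 < a) (hb : 0 < b) : 0 ≤ betaPDFReal a b := by
  intro x
  by_cases hx : 0 < x ∧ x < 1
  · exact (betaPDFReal_pos hx.1 hx.2 ha hb).le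
  · simp [betaPDFReal, hx]

lemma integral_rpow_betaMeasure {a b s : ℝ} (ha : 0 < a) (hb : 0 < b) (has : 0 < a + s) :
    ∫ x, x ^ s ∂betaMeasure a b = beta (a + s) b / beta a b := by
  refine integral_withDensity_ofReal_of_mul_ae_eq (by fun_prop)
    (betaPDFReal_nonneg ha hb) (q := betaPDFReal (a + s) b) (by fun_prop)
    (betaPDFReal_nonneg has hb) (lintegral_betaPDF_eq_one has hb) (ae_of_all _ fun x => ?_)
  by_cases hx : 0 < x ∧ x < 1
  · have hβa := (beta_pos ha hb).ne'
    have hβas := (beta_pos has hb).ne'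
    simp only [betaPDFReal, hx, and_self, if_true]
    rw [add_sub_right_comm, rpow_add hx.1]
    field_simp
  · simp [betaPDFReal, hx]

lemma ae_pos_betaMeasure (a b : ℝ) : ∀ᵐ x ∂betaMeasure a b, 0 < x := by
  unfold betaMeasure
  rw [ae_withDensity_iff (by unfold betaPDF; fun_prop)]
  exact ae_of_all _ fun x hpdf => not_le.1 (mt betaPDF_eq_zero_of_nonpos hpdf)

lemma beta_one_left {b : ℝ} (hb : 0 < b) : beta 1 b = 1 / b := by
  have hΓ := (Gamma_pos_of_pos hb).ne'
  rw [beta, Gamma_one, add_comm, Gamma_add_one hb.ne']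
  field_simp

lemma betaMeasure_one_left {b : ℝ} (hb : 0 < b) :
    betaMeasure 1 b = (volume.restrict (Ioo (0 : ℝ) 1)).withDensity
      fun x => ENNReal.ofReal (b * (1 - x) ^ (b - 1)) := by
  rw [← withDensity_indicator measurableSet_Ioo, betaMeasure]
  congr 1
  funext x
  by_cases hx : x ∈ Ioo (0 : ℝ) 1
  · rw [indicator_of_mem hx, betaPDF_of_pos_lt_one hx.1 hx.2, beta_one_left hb, one_div_one_div,
      sub_self, rpow_zero, mul_one]
  · rw [indicator_of_notMem hx, betaPDF_eq, if_neg (mt mem_Ioo.2 hx), ENNReal.ofReal_zero]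

lemma eventually_add_pos {a : ℝ} (ha : 0 < a) : ∀ᶠ s in 𝓝 (0 : ℝ), 0 < a + s :=
  (continuous_const_add a).continuousAt.eventually_const_lt (by simpa using ha)

variable {Ω : Type*} {mΩ : MeasurableSpace Ω} {P : Measure Ω} [IsFiniteMeasure P] {X : Ω → ℝ}
  {a b : ℝ}

lemma map_eq_gammaMeasure_of_integral_rpow (ha : 0 < a) (hb : 0 < b) (hX : ∀ᵐ ω ∂P, 0 < X ω)
    (h : ∀ᶠ s in 𝓝 (0 : ℝ), ∫ ω, X ω ^ s ∂P = Gamma (a + s) / (Gamma a * b ^ s)) :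
    P.map X = gammaMeasure a b := by
  have := isProbabilityMeasure_gammaMeasure ha hb
  rw [← Measure.map_id (μ := gammaMeasure a b)]
  refine map_eq_of_integral_rpow_eventuallyEq hX (ae_pos_gammaMeasure a b) ?_ ?_
  · filter_upwards [eventually_add_pos ha] with s hs
    simp only [id_eq, integral_rpow_gammaMeasure ha hb hs]
    positivity
  · filter_upwards [h, eventually_add_pos ha] with s hXs hs
    simp only [id_eq, hXs, integral_rpow_gammaMeasure ha hb hs]

lemma map_eq_betaMeasure_of_integral_rpow (ha : 0 < a) (hb : 0 < b) (hX : ∀ᵐ ω ∂P, 0 < X ω)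
    (h : ∀ᶠ s in 𝓝 (0 : ℝ), ∫ ω, X ω ^ s ∂P = beta (a + s) b / beta a b) :
    P.map X = betaMeasure a b := by
  have := isProbabilityMeasureBeta ha hb
  rw [← Measure.map_id (μ := betaMeasure a b)]
  refine map_eq_of_integral_rpow_eventuallyEq hX (ae_pos_betaMeasure a b) ?_ ?_
  · filter_upwards [eventually_add_pos ha] with s hs
    simp only [id_eq, integral_rpow_betaMeasure ha hb hs]
    exact (div_pos (beta_pos hs hb) (beta_pos ha hb)).ne'
  · filter_upwards [h, eventually_add_pos ha] with s hXs hs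
    simp only [id_eq, hXs, integral_rpow_betaMeasure ha hb hs]

end GammaBeta

/-- For the exponential compound Poisson subordinator, `Φ(s) = s/(s+c)` with `c > 0`,
the Mellin transforms of the perpetuity and remainder (the unique log-convex normalized
solutions of the functional equations) are `I(r) = Γ(c+r)/Γ(c+1)` and
`R(r) = Γ(c+1)Γ(r)/Γ(c+r) = c B(r,c)`; hence the perpetuity is a gamma variable of
parameter `c+1` and the remainder is a beta variable of parameters `(1,c)`. -/
theorem exponential_compound_poisson_perpetuity_remainder
    (c : ℝ) (hc : 0 < c)
    (I R : ℝ → ℝ)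
    (hIpos : ∀ r > (0 : ℝ), 0 < I r) (hI1 : I 1 = 1)
    (hIeq : ∀ r > (0 : ℝ), I (r + 1) = (r / (r / (r + c))) * I r)
    (hIconv : ConvexOn ℝ (Ioi 0) (fun r => Real.log (I r)))
    (hRpos : ∀ r > (0 : ℝ), 0 < R r) (hR1 : R 1 = 1)
    (hReq : ∀ r > (0 : ℝ), R (r + 1) = (r / (r + c)) * R r)
    (hRconv : ConvexOn ℝ (Ioi 0) (fun r => Real.log (R r)))
    -- random variables having these Mellin transforms
    {Ω : Type*} [MeasurableSpace Ω] (P : Measure Ω) [IsProbabilityMeasure P]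
    (Iv Rv : Ω → ℝ) (hIvm : Measurable Iv) (hRvm : Measurable Rv)
    (hIvpos : ∀ᵐ ω ∂P, 0 < Iv ω) (hRvpos : ∀ᵐ ω ∂P, 0 < Rv ω)
    (hIv : ∀ r > (0 : ℝ), ∫ ω, Iv ω ^ (r - 1) ∂P = I r)
    (hRv : ∀ r > (0 : ℝ), ∫ ω, Rv ω ^ (r - 1) ∂P = R r) :
    (∀ r > (0 : ℝ),
      I r = Real.Gamma (c + r) / Real.Gamma (c + 1) ∧
      R r = Real.Gamma (c + 1) * Real.Gamma r / Real.Gamma (c + r) ∧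
      R r = c * (Real.Gamma r * Real.Gamma c / Real.Gamma (r + c))) ∧
    -- `Iv` is gamma with parameter `c+1` (rate 1)
    Measure.map Iv P = ProbabilityTheory.gammaMeasure (c + 1) 1 ∧
    -- `Rv` is beta with parameters `(1, c)`, with density `c (1-x)^{c-1}` on `(0,1)`
    Measure.map Rv P =
      (volume.restrict (Ioo (0 : ℝ) 1)).withDensity
        (fun x => ENNReal.ofReal (c * (1 - x) ^ (c - 1))) := by
  have hI : IsWebsterSolution (fun r => r / (r / (r + c))) I := ⟨hIpos, hI1, hIeq, hIconv⟩
  have hR : IsWebsterSolution (fun r => r / (r + c)) R := ⟨hRpos, hR1, hReq, hRconv⟩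
  have hIΓ : ∀ r > 0, I r = Gamma (c + r) / Gamma (c + 1) := fun r hr =>
    (hI.congr_multiplier fun x hx => div_div_cancel₀ (ne_of_gt hx)).eq_Gamma_add_div hc.le hr
  have hRΓ : ∀ r > 0, R r = Gamma (c + 1) * Gamma r / Gamma (c + r) := fun r hr => by
    rw [← hI.mul_eq_Gamma hR hr, hIΓ r hr]
    field_simp
  have hRbeta : ∀ r > 0, R r = c * beta r c := fun r hr => by
    rw [hRΓ r hr, beta, Gamma_add_one hc.ne', add_comm r c]
    ring
  refine ⟨fun r hr => ⟨hIΓ r hr, hRΓ r hr, hRbeta r hr⟩, ?_, ?_⟩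
  · refine map_eq_gammaMeasure_of_integral_rpow (by positivity) one_pos hIvpos ?_
    filter_upwards [eventually_add_pos one_pos] with s hs
    simpa only [add_sub_cancel_left, hIΓ (1 + s) hs, one_rpow, mul_one, ← add_assoc]
      using hIv (1 + s) hs
  · rw [← betaMeasure_one_left hc]
    refine map_eq_betaMeasure_of_integral_rpow one_pos hc hRvpos ?_
    filter_upwards [eventually_add_pos one_pos] with s hs
    rw [beta_one_left hc, div_div_eq_mul_div, div_one, mul_comm, ← hRbeta (1 + s) hs,
      ← hRv (1 + s) hs, add_sub_cancel_left]
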